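/- Let P ∈ ℝ^{n×n} be symmetric positive semidefinite, q ∈ ℝⁿ, H ∈ ℝ^{m×n}, g ∈ ℝᵐ, D ⊆ ℝⁿ nonempty closed convex, K ⊆ ℝᵐ a nonempty closed convex cone with polar cone K°, and α > 0. For j = 1, 2, let z_j ∈ D, v_j ∈ ℝᵐ, and define w_j⁺ = π_{K°}[v_j + α(H z_j − g)], z_j⁺ = π_D[z_j − α(P z_j + q + Hᵀ w_j⁺)], v_j⁺ = w_j⁺ + α H(z_j⁺ − z_j). Then 0 ≤ ⟨z₁⁺ − z₂⁺, z₁ − z₁⁺ − z₂ + z₂⁺⟩ + ⟨v₁⁺ − v₂⁺, v₁ − v₁⁺ − v₂ + v₂⁺⟩ + α⟨P(z₂ − z₁), z₁⁺ − z₂⁺⟩ + α⟨H(z₁ − z₁⁺ − z₂ + z₂⁺), v₁ − v₁⁺ − v₂ + v₂⁺⟩. -/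

import Mathlib

open scoped RealInnerProductSpace
open Filter Topology Metric ContinuousLinearMap

/-- Projection onto a set: the unique nearest point, when it exists
(it exists and is unique for nonempty closed convex sets in Euclidean space). -/
noncomputable def proj {E : Type*} [NormedAddCommGroup E] [InnerProductSpace ℝ E]
    (S : Set E) (x : E) : E :=
  open Classical in
  if h : ∃ y, y ∈ S ∧ ∀ z ∈ S, ‖x - y‖ ≤ ‖x - z‖ then h.choose else 0

/-- The polar cone `K° = {w | ⟪w, y⟫ ≤ 0 for all y ∈ K}`. -/
def polarCone {E : Type*} [NormedAddCommGroup E] [InnerProductSpace ℝ E]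
    (K : Set E) : Set E := {w | ∀ y ∈ K, ⟪w, y⟫ ≤ 0}

/-- The recession cone `rec D = {y | y + z ∈ D for all z ∈ D}`. -/
def recCone {E : Type*} [NormedAddCommGroup E] (D : Set E) : Set E :=
  {y | ∀ z ∈ D, y + z ∈ D}

/-- The normal cone of `D` at `z`: `N_D(z) = {y | ⟪y, z' - z⟫ ≤ 0 for all z' ∈ D}`. -/
def normalCone {E : Type*} [NormedAddCommGroup E] [InnerProductSpace ℝ E]
    (D : Set E) (z : E) : Set E := {y | ∀ z' ∈ D, ⟪y, z' - z⟫ ≤ 0}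

/- Both projections in a PIPG step leave residuals in a normal cone, and normal cones are monotone;
so two steps give one nonnegative inner product on the dual side and one on the primal side. The
first carries the term `α⟪H (z1' - z2'), w1 - w2⟫` and the second, through the adjoint of `H`, its
negative. They add up to the asserted expression because the extrapolation `v' = w + α H (z' - z)`
makes `v' + α H (z - z')` equal to `w`. -/

section Projection

theorem norm_sub_eq_iInf_iff_forall_norm_le {E : Type*} [SeminormedAddCommGroup E] {S : Set E}
    {x y : E} (hy : y ∈ S) :
    (‖x - y‖ = ⨅ s : S, ‖x - s‖) ↔ ∀ s ∈ S, ‖x - y‖ ≤ ‖x - s‖ := by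
  have hbdd : BddBelow (Set.range fun s : S => ‖x - s‖) :=
    ⟨0, Set.forall_mem_range.2 fun _ => norm_nonneg _⟩
  have : Nonempty S := ⟨⟨y, hy⟩⟩
  refine ⟨fun h s hs => h.trans_le (ciInf_le hbdd ⟨s, hs⟩), fun h => ?_⟩
  exact le_antisymm (le_ciInf fun s => h s s.2) (ciInf_le hbdd ⟨y, hy⟩)

variable {E : Type*} [NormedAddCommGroup E] [InnerProductSpace ℝ E] {S : Set E} {x y u v : E}

theorem proj_mem_and_forall_norm_le (hne : S.Nonempty) (hcomplete : IsComplete S)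
    (hconv : Convex ℝ S) (x : E) :
    proj S x ∈ S ∧ ∀ s ∈ S, ‖x - proj S x‖ ≤ ‖x - s‖ := by
  have hex : ∃ y, y ∈ S ∧ ∀ s ∈ S, ‖x - y‖ ≤ ‖x - s‖ := by
    obtain ⟨y, hy, hmin⟩ := exists_norm_eq_iInf_of_complete_convex hne hcomplete hconv x
    exact ⟨y, hy, (norm_sub_eq_iInf_iff_forall_norm_le hy).1 hmin⟩
  rw [show proj S x = hex.choose from dif_pos hex]
  exact hex.choose_spec

theorem proj_mem (hne : S.Nonempty) (hcomplete : IsComplete S) (hconv : Convex ℝ S) (x : E) :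
    proj S x ∈ S :=
  (proj_mem_and_forall_norm_le hne hcomplete hconv x).1

theorem sub_proj_mem_normalCone (hne : S.Nonempty) (hcomplete : IsComplete S)
    (hconv : Convex ℝ S) (x : E) : x - proj S x ∈ normalCone S (proj S x) := by
  obtain ⟨hmem, hmin⟩ := proj_mem_and_forall_norm_le hne hcomplete hconv x
  exact (norm_eq_iInf_iff_real_inner_le_zero hconv hmem).1
    ((norm_sub_eq_iInf_iff_forall_norm_le hmem).2 hmin)

theorem inner_sub_sub_nonneg_of_mem_normalCone (hx : x ∈ S) (hy : y ∈ S)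
    (hu : u ∈ normalCone S x) (hv : v ∈ normalCone S y) : 0 ≤ ⟪x - y, u - v⟫ := by
  have hux : ⟪u, y - x⟫ ≤ 0 := hu y hy
  have hvy : ⟪v, x - y⟫ ≤ 0 := hv x hx
  rw [← neg_sub x y, inner_neg_right] at hux
  rw [real_inner_comm, inner_sub_left]
  linarith

theorem inner_proj_sub_proj_nonneg (hne : S.Nonempty) (hcomplete : IsComplete S)
    (hconv : Convex ℝ S) (x y : E) :
    0 ≤ ⟪proj S x - proj S y, (x - proj S x) - (y - proj S y)⟫ :=
  inner_sub_sub_nonneg_of_mem_normalCone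
    (proj_mem hne hcomplete hconv x) (proj_mem hne hcomplete hconv y)
    (sub_proj_mem_normalCone hne hcomplete hconv x) (sub_proj_mem_normalCone hne hcomplete hconv y)

end Projection

section PolarCone

variable {E : Type*} [NormedAddCommGroup E] [InnerProductSpace ℝ E]

theorem polarCone_eq_iInter (K : Set E) : polarCone K = ⋂ y ∈ K, {w | ⟪w, y⟫ ≤ 0} := by
  ext w
  simp only [polarCone, Set.mem_ofPred_eq, Set.mem_iInter]

theorem polarCone_nonempty (K : Set E) : (polarCone K).Nonempty :=
  ⟨0, fun y _ => (inner_zero_left y).le⟩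

theorem isClosed_polarCone (K : Set E) : IsClosed (polarCone K) := by
  rw [polarCone_eq_iInter]
  exact isClosed_biInter fun y _ => isClosed_le (by fun_prop) continuous_const

theorem convex_polarCone (K : Set E) : Convex ℝ (polarCone K) := by
  rw [polarCone_eq_iInter]
  exact convex_iInter₂ fun y _ => convex_halfSpace_le ((innerₗ E).flip y).isLinear 0

end PolarCone

section PIPG

variable {E F : Type*} [NormedAddCommGroup E] [InnerProductSpace ℝ E] [CompleteSpace E]
  [NormedAddCommGroup F] [InnerProductSpace ℝ F] [CompleteSpace F]

/-- One step `(z, v) ↦ (z', v')`, with intermediate dual point `w`, of the proportional-integral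
projected gradient method (PIPG). The map `G` stands for the gradient of the objective, which is
`z ↦ P z + q` in the quadratic case, and the set `C` for the polar of the constraint cone. -/
structure IsPIPGStep (G : E → E) (H : E →L[ℝ] F) (g : F) (D : Set E) (C : Set F) (α : ℝ)
    (z : E) (v w : F) (z' : E) (v' : F) : Prop where
  dual_eq : w = proj C (v + α • (H z - g))
  primal_eq : z' = proj D (z - α • (G z + adjoint H w))
  extrapolation_eq : v' = w + α • H (z' - z)

namespace IsPIPGStep

variable {G : E → E} {H : E →L[ℝ] F} {g : F} {D : Set E} {C : Set F} {α : ℝ}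
  {z1 z2 z1' z2' : E} {v1 v2 w1 w2 v1' v2' : F}

theorem dual_inner_nonneg (hne : C.Nonempty) (hclosed : IsClosed C) (hconv : Convex ℝ C)
    (h1 : IsPIPGStep G H g D C α z1 v1 w1 z1' v1')
    (h2 : IsPIPGStep G H g D C α z2 v2 w2 z2' v2') :
    0 ≤ ⟪w1 - w2, v1 - v1' - v2 + v2'⟫ + α * ⟪H (z1' - z2'), w1 - w2⟫ := by
  have hmono := inner_proj_sub_proj_nonneg hne hclosed.isComplete hconv
    (v1 + α • (H z1 - g)) (v2 + α • (H z2 - g))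
  rw [← h1.dual_eq, ← h2.dual_eq] at hmono
  have hresidual : (v1 + α • (H z1 - g) - w1) - (v2 + α • (H z2 - g) - w2)
      = (v1 - v1' - v2 + v2') + α • H (z1' - z2') := by
    rw [h1.extrapolation_eq, h2.extrapolation_eq]
    simp only [map_sub]
    module
  rwa [hresidual, inner_add_right, real_inner_smul_right, real_inner_comm (H _)] at hmono

theorem primal_inner_nonneg (hne : D.Nonempty) (hclosed : IsClosed D) (hconv : Convex ℝ D)
    (h1 : IsPIPGStep G H g D C α z1 v1 w1 z1' v1')
    (h2 : IsPIPGStep G H g D C α z2 v2 w2 z2' v2') :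
    0 ≤ ⟪z1' - z2', z1 - z1' - z2 + z2'⟫ + α * ⟪G z2 - G z1, z1' - z2'⟫
      - α * ⟪H (z1' - z2'), w1 - w2⟫ := by
  have hmono := inner_proj_sub_proj_nonneg hne hclosed.isComplete hconv
    (z1 - α • (G z1 + adjoint H w1)) (z2 - α • (G z2 + adjoint H w2))
  rw [← h1.primal_eq, ← h2.primal_eq] at hmono
  have hresidual : (z1 - α • (G z1 + adjoint H w1) - z1') - (z2 - α • (G z2 + adjoint H w2) - z2')
      = (z1 - z1' - z2 + z2') + α • (G z2 - G z1) - α • adjoint H (w1 - w2) := by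
    rw [map_sub]
    module
  rwa [hresidual, inner_sub_right, inner_add_right, real_inner_smul_right, real_inner_smul_right,
    adjoint_inner_right, real_inner_comm (G z2 - G z1)] at hmono

theorem extrapolated_sub_add_smul (h1 : IsPIPGStep G H g D C α z1 v1 w1 z1' v1')
    (h2 : IsPIPGStep G H g D C α z2 v2 w2 z2' v2') :
    v1' - v2' + α • H (z1 - z1' - z2 + z2') = w1 - w2 := by
  rw [h1.extrapolation_eq, h2.extrapolation_eq]
  simp only [map_sub, map_add]
  module

end IsPIPGStep

theorem stmt15_general {G : E → E} {H : E →L[ℝ] F} {g : F} {D : Set E} {C : Set F} {α : ℝ}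
    {z1 z2 z1' z2' : E} {v1 v2 w1 w2 v1' v2' : F}
    (hDne : D.Nonempty) (hDcl : IsClosed D) (hDconv : Convex ℝ D)
    (hCne : C.Nonempty) (hCcl : IsClosed C) (hCconv : Convex ℝ C)
    (h1 : IsPIPGStep G H g D C α z1 v1 w1 z1' v1')
    (h2 : IsPIPGStep G H g D C α z2 v2 w2 z2' v2') :
    0 ≤ ⟪z1' - z2', z1 - z1' - z2 + z2'⟫ + ⟪v1' - v2', v1 - v1' - v2 + v2'⟫
        + α * ⟪G z2 - G z1, z1' - z2'⟫
        + α * ⟪H (z1 - z1' - z2 + z2'), v1 - v1' - v2 + v2'⟫ := by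
  have hdual := h1.dual_inner_nonneg hCne hCcl hCconv h2
  have hprimal := h1.primal_inner_nonneg hDne hDcl hDconv h2
  have hsplit : ⟪w1 - w2, v1 - v1' - v2 + v2'⟫ = ⟪v1' - v2', v1 - v1' - v2 + v2'⟫
      + α * ⟪H (z1 - z1' - z2 + z2'), v1 - v1' - v2 + v2'⟫ := by
    rw [← h1.extrapolated_sub_add_smul h2, inner_add_left, real_inner_smul_left]
  linarith

end PIPG

/-- fundamental inner-product inequality satisfied by one PIPG step
applied to two points. -/
theorem stmt15 {n m : ℕ}
    (P : EuclideanSpace ℝ (Fin n) →L[ℝ] EuclideanSpace ℝ (Fin n))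
    (hPsa : IsSelfAdjoint P) (hPpsd : ∀ x, 0 ≤ ⟪P x, x⟫)
    (q : EuclideanSpace ℝ (Fin n))
    (H : EuclideanSpace ℝ (Fin n) →L[ℝ] EuclideanSpace ℝ (Fin m))
    (g : EuclideanSpace ℝ (Fin m))
    (D : Set (EuclideanSpace ℝ (Fin n)))
    (hDne : D.Nonempty) (hDcl : IsClosed D) (hDconv : Convex ℝ D)
    (K : Set (EuclideanSpace ℝ (Fin m)))
    (hKne : K.Nonempty) (hKcl : IsClosed K) (hKconv : Convex ℝ K)
    (hKcone : ∀ w ∈ K, ∀ a : ℝ, 0 ≤ a → a • w ∈ K)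
    (α : ℝ) (hα0 : 0 < α)
    (z1 z2 : EuclideanSpace ℝ (Fin n)) (hz1 : z1 ∈ D) (hz2 : z2 ∈ D)
    (v1 v2 : EuclideanSpace ℝ (Fin m))
    (w1p w2p : EuclideanSpace ℝ (Fin m))
    (z1p z2p : EuclideanSpace ℝ (Fin n))
    (v1p v2p : EuclideanSpace ℝ (Fin m))
    (hw1 : w1p = proj (polarCone K) (v1 + α • (H z1 - g)))
    (hw2 : w2p = proj (polarCone K) (v2 + α • (H z2 - g)))
    (hz1p : z1p = proj D (z1 - α • (P z1 + q + (ContinuousLinearMap.adjoint H) w1p)))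
    (hz2p : z2p = proj D (z2 - α • (P z2 + q + (ContinuousLinearMap.adjoint H) w2p)))
    (hv1p : v1p = w1p + α • H (z1p - z1))
    (hv2p : v2p = w2p + α • H (z2p - z2)) :
    0 ≤ ⟪z1p - z2p, z1 - z1p - z2 + z2p⟫ + ⟪v1p - v2p, v1 - v1p - v2 + v2p⟫
        + α * ⟪P (z2 - z1), z1p - z2p⟫
        + α * ⟪H (z1 - z1p - z2 + z2p), v1 - v1p - v2 + v2p⟫ := by
  simpa only [add_sub_add_right_eq_sub, map_sub] using stmt15_general (G := fun z => P z + q)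
    hDne hDcl hDconv (polarCone_nonempty K) (isClosed_polarCone K) (convex_polarCone K)
    ⟨hw1, hz1p, hv1p⟩ ⟨hw2, hz2p, hv2p⟩
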